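/- Under Assumption 1, the law P_{XZY} of (Ẍ,Y) equals the measure P_{Ẍ⊗Y|Z} on 𝒳̈ × 𝒴 if and only if, for every (t^{(1)},t^{(2)}) ∈ 𝒳̈ × 𝒴, the witness function satisfies Δ(t^{(1)},t^{(2)}) = 0; in particular, since k is characteristic, P_{XZY} ≠ P_{Ẍ⊗Y|Z} implies that Δ is not identically zero. -/

import Mathlib

open MeasureTheory ProbabilityTheory Filter Topology Asymptotics
open scoped RealInnerProductSpace

noncomputable section

namespace CIPaper

/-- A positive definite kernel. -/
def PosDefKernel {D : Type*} (k : D → D → ℝ) : Prop :=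
  ∀ (n : ℕ) (x : Fin n → D) (c : Fin n → ℝ),
    0 ≤ ∑ i : Fin n, ∑ j : Fin n, c i * c j * k (x i) (x j)

/-- The mean embedding of `ν` with respect to the kernel `k`. -/
def meanEmbed {D : Type*} [MeasurableSpace D] (k : D → D → ℝ) (ν : Measure D) (t : D) : ℝ :=
  ∫ x, k x t ∂ν

/-- A kernel is characteristic if the mean embedding is injective on probability measures. -/
def Characteristic {D : Type*} [MeasurableSpace D] (k : D → D → ℝ) : Prop :=
  ∀ P Q : Measure D, IsProbabilityMeasure P → IsProbabilityMeasure Q →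
    (∀ t, meanEmbed k P t = meanEmbed k Q t) → P = Q

def BoundedKernel {D : Type*} (k : D → D → ℝ) : Prop := ∃ C, ∀ x y, |k x y| ≤ C

/-- Assumption 1 of the paper, for the tensor product kernel built from `kX` and `kY` :
the tensor kernel is positive definite, characteristic, bounded, continuous and analytic. -/
structure Assumption1 {DX DY : Type*} [MeasurableSpace DX] [MeasurableSpace DY]
    [NormedAddCommGroup DX] [NormedSpace ℝ DX] [NormedAddCommGroup DY] [NormedSpace ℝ DY]
    (kX : DX → DX → ℝ) (kY : DY → DY → ℝ) : Prop where
  posdef : PosDefKernel fun p q : DX × DY => kX p.1 q.1 * kY p.2 q.2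
  charac : Characteristic fun p q : DX × DY => kX p.1 q.1 * kY p.2 q.2
  bounded : BoundedKernel fun p q : DX × DY => kX p.1 q.1 * kY p.2 q.2
  continuous : Continuous fun pq : (DX × DY) × (DX × DY) => kX pq.1.1 pq.2.1 * kY pq.1.2 pq.2.2
  analytic : ∀ p : DX × DY, AnalyticOnNhd ℝ (fun q : DX × DY => kX p.1 q.1 * kY p.2 q.2) Set.univ

/-- The random metric `d_{p,J}` between two measures, with locations `t`. -/
def dpJ {D : Type*} [MeasurableSpace D] (k : D → D → ℝ) (p : ℕ) {J : ℕ}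
    (t : Fin J → D) (P Q : Measure D) : ℝ :=
  ((J : ℝ)⁻¹ * ∑ j : Fin J, |meanEmbed k P (t j) - meanEmbed k Q (t j)| ^ p) ^ ((p : ℝ)⁻¹)

/-- `P` is the measure `P_{Ẍ⊗Y|Z}` of the paper : a Borel probability measure with
`P(A×B) = E[E[1_A(Ẍ)|Z]·E[1_B(Y)|Z]]` for all measurable `A`, `B`. -/
def IsCondProdMeasure {Ω : Type*} [MeasurableSpace Ω] (μ : Measure Ω)
    {DX DZ DY : Type*} [MeasurableSpace DX] [MeasurableSpace DZ] [MeasurableSpace DY]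
    (X : Ω → DX) (Z : Ω → DZ) (Y : Ω → DY) (P : Measure ((DX × DZ) × DY)) : Prop :=
  IsProbabilityMeasure P ∧
    ∀ (A : Set (DX × DZ)) (B : Set DY), MeasurableSet A → MeasurableSet B →
      (P (A ×ˢ B)).toReal =
        ∫ ω, ((μ[fun ω' => A.indicator (fun _ => (1 : ℝ)) (X ω', Z ω') |
                MeasurableSpace.comap Z inferInstance]) ω)
            * ((μ[fun ω' => B.indicator (fun _ => (1 : ℝ)) (Y ω') |
                MeasurableSpace.comap Z inferInstance]) ω) ∂μ

/-- The witness function `Δ`. -/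
def witness {Ω : Type*} [MeasurableSpace Ω] (μ : Measure Ω)
    {DX DZ DY : Type*} [MeasurableSpace DZ]
    (kX : DX × DZ → DX × DZ → ℝ) (kY : DY → DY → ℝ)
    (X : Ω → DX) (Z : Ω → DZ) (Y : Ω → DY) (t1 : DX × DZ) (t2 : DY) : ℝ :=
  ∫ ω, (kX t1 (X ω, Z ω) -
          (μ[fun ω' => kX t1 (X ω', Z ω') | MeasurableSpace.comap Z inferInstance]) ω)
      * (kY t2 (Y ω) -
          (μ[fun ω' => kY t2 (Y ω') | MeasurableSpace.comap Z inferInstance]) ω) ∂μ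

/-- Cramér–Wold characterization: `ν` is the centered Gaussian measure on `ℝ^J` with
covariance matrix `S`. -/
def IsCenteredGaussian {J : ℕ} (S : Matrix (Fin J) (Fin J) ℝ) (ν : Measure (Fin J → ℝ)) : Prop :=
  IsProbabilityMeasure ν ∧
    ∀ a : Fin J → ℝ,
      ν.map (fun v => ∑ j, a j * v j) =
        gaussianReal 0 (Real.toNNReal (∑ i, ∑ j, a i * S i j * a j))

/-- Convergence in distribution (weak convergence of the image laws). -/
def TendstoInDistribution {Ω : Type*} [MeasurableSpace Ω] (μ : Measure Ω) {E : Type*}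
    [TopologicalSpace E] [MeasurableSpace E] (W : ℕ → Ω → E) (ν : Measure E) : Prop :=
  ∀ f : BoundedContinuousFunction E ℝ,
    Tendsto (fun n : ℕ => ∫ ω, f (W n ω) ∂μ) atTop (𝓝 (∫ x, f x ∂ν))

/-- The one-sample statistic `u_i(j)` of the paper (oracle version), where `e1`, `e2` are
the conditional mean functions. -/
def uStat {Ω DX DZ DY : Type*} (kX : DX × DZ → DX × DZ → ℝ) (kY : DY → DY → ℝ)
    (e1 : DX × DZ → DZ → ℝ) (e2 : DY → DZ → ℝ)
    (xS : ℕ → Ω → DX) (zS : ℕ → Ω → DZ) (yS : ℕ → Ω → DY)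
    {J : ℕ} (t : Fin J → (DX × DZ) × DY) (i : ℕ) (j : Fin J) (ω : Ω) : ℝ :=
  (kX (t j).1 (xS i ω, zS i ω) - e1 (t j).1 (zS i ω)) *
    (kY (t j).2 (yS i ω) - e2 (t j).2 (zS i ω))

/-- `S_n`, the empirical mean of the `u_i`. -/
def SStat {Ω DX DZ DY : Type*} (kX : DX × DZ → DX × DZ → ℝ) (kY : DY → DY → ℝ)
    (e1 : DX × DZ → DZ → ℝ) (e2 : DY → DZ → ℝ)
    (xS : ℕ → Ω → DX) (zS : ℕ → Ω → DZ) (yS : ℕ → Ω → DY)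
    {J : ℕ} (t : Fin J → (DX × DZ) × DY) (n : ℕ) (ω : Ω) : Fin J → ℝ :=
  fun j => (n : ℝ)⁻¹ * ∑ i ∈ Finset.range n, uStat kX kY e1 e2 xS zS yS t i j ω

/-- The covariance matrix `Σ = E[u₁ u₁ᵀ]`. -/
def covMat {Ω DX DZ DY : Type*} [MeasurableSpace Ω] (μ : Measure Ω)
    (kX : DX × DZ → DX × DZ → ℝ) (kY : DY → DY → ℝ)
    (e1 : DX × DZ → DZ → ℝ) (e2 : DY → DZ → ℝ)
    (xS : ℕ → Ω → DX) (zS : ℕ → Ω → DZ) (yS : ℕ → Ω → DY)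
    {J : ℕ} (t : Fin J → (DX × DZ) × DY) : Matrix (Fin J) (Fin J) ℝ :=
  Matrix.of fun j j' =>
    ∫ ω, uStat kX kY e1 e2 xS zS yS t 0 j ω * uStat kX kY e1 e2 xS zS yS t 0 j' ω ∂μ

/-- The empirical covariance matrix `Σ̂_n` of the oracle `u_i`. -/
def covHat {Ω DX DZ DY : Type*} (kX : DX × DZ → DX × DZ → ℝ) (kY : DY → DY → ℝ)
    (e1 : DX × DZ → DZ → ℝ) (e2 : DY → DZ → ℝ)
    (xS : ℕ → Ω → DX) (zS : ℕ → Ω → DZ) (yS : ℕ → Ω → DY)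
    {J : ℕ} (t : Fin J → (DX × DZ) × DY) (n : ℕ) (ω : Ω) : Matrix (Fin J) (Fin J) ℝ :=
  Matrix.of fun j j' => (n : ℝ)⁻¹ * ∑ i ∈ Finset.range n,
    uStat kX kY e1 e2 xS zS yS t i j ω * uStat kX kY e1 e2 xS zS yS t i j' ω

/-- The regularized least squares estimator built from the first `r` samples `zs` with
targets `target`, kernel `kZ` and regularization parameter `lam`. -/
def rls {DZ : Type*} (kZ : DZ → DZ → ℝ) (zs : ℕ → DZ) (target : ℕ → ℝ)
    (r : ℕ) (lam : ℝ) (z : DZ) : ℝ :=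
  ∑ i : Fin r,
    (((Matrix.of fun i l : Fin r => kZ (zs i) (zs l)) +
        ((r : ℝ) * lam) • (1 : Matrix (Fin r) (Fin r) ℝ))⁻¹.mulVec
      fun i : Fin r => target i) i * kZ (zs i) z

/-- The statistic `ũ_{i,r}(j)` built from the RLS estimators. -/
def uTildeStat {Ω DX DZ DY : Type*} (kX : DX × DZ → DX × DZ → ℝ) (kY : DY → DY → ℝ)
    {J : ℕ} (kZ1 kZ2 : Fin J → DZ → DZ → ℝ)
    (xS : ℕ → Ω → DX) (zS : ℕ → Ω → DZ) (yS : ℕ → Ω → DY)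
    (t : Fin J → (DX × DZ) × DY) (r : ℕ) (lam : ℝ) (i : ℕ) (j : Fin J) (ω : Ω) : ℝ :=
  (kX (t j).1 (xS i ω, zS i ω) -
      rls (kZ1 j) (fun l => zS l ω) (fun l => kX (t j).1 (xS l ω, zS l ω)) r lam (zS i ω)) *
    (kY (t j).2 (yS i ω) -
      rls (kZ2 j) (fun l => zS l ω) (fun l => kY (t j).2 (yS l ω)) r lam (zS i ω))

/-- `S̃_{n,r}`. -/
def STilde {Ω DX DZ DY : Type*} (kX : DX × DZ → DX × DZ → ℝ) (kY : DY → DY → ℝ)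
    {J : ℕ} (kZ1 kZ2 : Fin J → DZ → DZ → ℝ)
    (xS : ℕ → Ω → DX) (zS : ℕ → Ω → DZ) (yS : ℕ → Ω → DY)
    (t : Fin J → (DX × DZ) × DY) (n r : ℕ) (lam : ℝ) (ω : Ω) : Fin J → ℝ :=
  fun j => (n : ℝ)⁻¹ * ∑ i ∈ Finset.range n,
    uTildeStat kX kY kZ1 kZ2 xS zS yS t r lam i j ω

/-- `Σ_{n,r}`, the empirical covariance matrix of the `ũ_{i,r}`. -/
def covTilde {Ω DX DZ DY : Type*} (kX : DX × DZ → DX × DZ → ℝ) (kY : DY → DY → ℝ)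
    {J : ℕ} (kZ1 kZ2 : Fin J → DZ → DZ → ℝ)
    (xS : ℕ → Ω → DX) (zS : ℕ → Ω → DZ) (yS : ℕ → Ω → DY)
    (t : Fin J → (DX × DZ) × DY) (n r : ℕ) (lam : ℝ) (ω : Ω) : Matrix (Fin J) (Fin J) ℝ :=
  Matrix.of fun j j' => (n : ℝ)⁻¹ * ∑ i ∈ Finset.range n,
    uTildeStat kX kY kZ1 kZ2 xS zS yS t r lam i j ω *
      uTildeStat kX kY kZ1 kZ2 xS zS yS t r lam i j' ω

/-- The positive semidefinite square root of a positive semidefinite matrix (the definition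
of `Matrix.PosSemidef.sqrt` in the older Mathlib, over `ℝ`). -/
def _root_.Matrix.PosSemidef.sqrt {n : Type*} [Fintype n] [DecidableEq n]
    {A : Matrix n n ℝ} (hA : A.PosSemidef) : Matrix n n ℝ :=
  (hA.1.eigenvectorUnitary : Matrix n n ℝ) * Matrix.diagonal (Real.sqrt ∘ hA.1.eigenvalues) *
    (star hA.1.eigenvectorUnitary : Matrix n n ℝ)

open scoped Classical in
/-- The inverse square root `M^{-1/2}` of a positive semidefinite matrix. -/
def invSqrtMat {J : ℕ} (M : Matrix (Fin J) (Fin J) ℝ) : Matrix (Fin J) (Fin J) ℝ :=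
  if h : M.PosSemidef then h.sqrt⁻¹ else 0

/-- The chi-square distribution with `J` degrees of freedom, realized as the law of the sum of
squares of `J` independent standard Gaussians. -/
def chiSq (J : ℕ) : Measure ℝ :=
  (Measure.pi fun _ : Fin J => gaussianReal 0 1).map fun v => ∑ j, v j ^ 2

/-- Assumption 2 of the paper for the operator `L` on `L²(P_Z)` :
`Tr((L + λ)⁻¹ L) ≤ Q λ^{-γ}`, the trace of the positive operator being computed in any
Hilbert basis. -/
def TraceAssumption {DZ : Type*} [MeasurableSpace DZ] (PZ : Measure DZ)
    (L : Lp ℝ 2 PZ →L[ℝ] Lp ℝ 2 PZ) (Q γ : ℝ) : Prop :=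
  ∀ lam : ℝ, 0 < lam → ∀ (ι : Type) (e : HilbertBasis ι ℝ (Lp ℝ 2 PZ)),
    ∑' i, ⟪(Ring.inverse (L + lam • (1 : Lp ℝ 2 PZ →L[ℝ] Lp ℝ 2 PZ)) * L) (e i), e i⟫ ≤
      Q * lam ^ (-γ)

/-- `P = L^s` : `P` is self-adjoint and acts as `c ^ s` on every eigenvector of `L`
(this determines the fractional power, via functional calculus, of a positive self-adjoint
compact operator). -/
def IsFracPower {H : Type*} [NormedAddCommGroup H] [InnerProductSpace ℝ H]
    (L : H →L[ℝ] H) (s : ℝ) (P : H →L[ℝ] H) : Prop :=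
  (∀ v w : H, ⟪P v, w⟫ = ⟪v, P w⟫) ∧
    ∀ (c : ℝ) (v : H), L v = c • v → P v = c ^ s • v

end CIPaper

open CIPaper

/-!
Expanding the product of residuals gives `Δ t = ∫ k t · dP_{XZY} - ∫ k t · dP_{Ẍ⊗Y|Z}`: the cross
terms collapse because conditional expectation is self-adjoint, and the same self-adjointness
extends the defining identity of `P_{Ẍ⊗Y|Z}` from rectangles to products of bounded functions, one
factor at a time. So `Δ` vanishes iff the two measures `P`, `Q` have the same embedding through
`k t ·`.

The mean embedding uses `k · t` instead, and `PosDefKernel` does not ask for symmetry. Averaging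
over i.i.d. samples shows that the (possibly non-symmetric) energy `∫∫ k dν dν` is nonnegative for
`ν = P - Q + ε δ_t`. When `∫ k s · dν₀ = 0` for all `s`, where `ν₀ = P - Q`, this energy is
`ε ∫ k · t dν₀ + ε² k t t`, and its nonnegativity for all `ε` forces `∫ k · t dν₀ = 0`.
-/

namespace CIPaper

section BoundedKernel

theorem BoundedKernel.sum_sum_comp {D : Type*} {k : D → D → ℝ} (hb : BoundedKernel k)
    {ι : Type*} [Fintype ι] (c : ι → ℝ) :
    BoundedKernel fun x y : ι → D => ∑ i, ∑ j, c i * c j * k (x i) (y j) := by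
  obtain ⟨C, hC⟩ := hb
  refine ⟨∑ i, ∑ j, |c i * c j| * C, fun x y => ?_⟩
  refine (Finset.abs_sum_le_sum_abs _ _).trans (Finset.sum_le_sum fun i _ => ?_)
  refine (Finset.abs_sum_le_sum_abs _ _).trans (Finset.sum_le_sum fun j _ => ?_)
  rw [abs_mul]
  gcongr
  exact hC _ _

variable {D : Type*} [MeasurableSpace D] {k : D → D → ℝ}

theorem BoundedKernel.integrable_comp (hb : BoundedKernel k) (hm : Measurable k.uncurry)
    {α : Type*} [MeasurableSpace α] (ν : Measure α) [IsFiniteMeasure ν] {φ ψ : α → D}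
    (hφ : Measurable φ) (hψ : Measurable ψ) : Integrable (fun a => k (φ a) (ψ a)) ν := by
  obtain ⟨C, hC⟩ := hb
  exact .of_bound (hm.comp (hφ.prodMk hψ)).aestronglyMeasurable C
    (.of_forall fun a => hC (φ a) (ψ a))

theorem BoundedKernel.integrable_integral (hb : BoundedKernel k) (hm : Measurable k.uncurry)
    (μ ν : Measure D) [IsFiniteMeasure μ] [IsFiniteMeasure ν] :
    Integrable (fun x => ∫ y, k x y ∂ν) μ :=
  (hb.integrable_comp hm (μ.prod ν) measurable_fst measurable_snd).integral_prod_left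

theorem measurable_uncurry_sum_sum_comp (hm : Measurable k.uncurry) {ι : Type*} [Fintype ι]
    (c : ι → ℝ) :
    Measurable (Function.uncurry fun x y : ι → D => ∑ i, ∑ j, c i * c j * k (x i) (y j)) :=
  Finset.measurable_fun_sum _ fun i _ => Finset.measurable_fun_sum _ fun j _ =>
    Measurable.const_mul (f := fun p : (ι → D) × (ι → D) => k (p.1 i) (p.2 j))
      (hm.comp (by fun_prop : Measurable fun p : (ι → D) × (ι → D) => (p.1 i, p.2 j))) _

end BoundedKernel

section Energy

theorem PosDefKernel.sum_nonneg {D : Type*} {k : D → D → ℝ} (hk : PosDefKernel k)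
    {ι : Type*} [Fintype ι] (x : ι → D) (c : ι → ℝ) :
    0 ≤ ∑ i, ∑ j, c i * c j * k (x i) (x j) := by
  let e := Fintype.equivFin ι
  have h := hk _ (x ∘ e.symm) (c ∘ e.symm)
  simp only [Function.comp_apply] at h
  rwa [e.symm.sum_comp fun i => ∑ j, c i * c (e.symm j) * k (x i) (x (e.symm j)),
    Finset.sum_congr rfl fun i _ => e.symm.sum_comp fun j => c i * c j * k (x i) (x j)] at h

theorem PosDefKernel.sum_sum_comp {D : Type*} {k : D → D → ℝ} (hk : PosDefKernel k)
    {ι : Type*} [Fintype ι] (c : ι → ℝ) :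
    PosDefKernel fun x y : ι → D => ∑ i, ∑ j, c i * c j * k (x i) (y j) := by
  intro n x w
  have h := hk.sum_nonneg (fun a : Fin n × ι => x a.1 a.2) fun a => w a.1 * c a.2
  simp only [Fintype.sum_prod_type] at h
  refine h.trans_eq (Finset.sum_congr rfl fun a _ => ?_)
  rw [Finset.sum_comm]
  refine Finset.sum_congr rfl fun b _ => ?_
  simp only [Finset.mul_sum]
  exact Finset.sum_congr rfl fun i _ => Finset.sum_congr rfl fun j _ => by ring

theorem integral_pi_eval_eval {ι : Type*} [Fintype ι] {X : ι → Type*}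
    [∀ i, MeasurableSpace (X i)] (μ : ∀ i, Measure (X i)) [∀ i, IsProbabilityMeasure (μ i)]
    {i j : ι} (hij : i ≠ j) {f : X i × X j → ℝ} (hf : Measurable f) :
    ∫ x, f (x i, x j) ∂Measure.pi μ = ∫ p, f p ∂(μ i).prod (μ j) := by
  have hindep : IndepFun (fun x : ∀ i, X i => x i) (fun x => x j) (Measure.pi μ) :=
    (iIndepFun_pi (X := fun _ => id) fun _ => aemeasurable_id).indepFun hij
  have hmap : (Measure.pi μ).map (fun x => (x i, x j)) = (μ i).prod (μ j) := by
    rw [(indepFun_iff_map_prod_eq_prod_map_map (measurable_pi_apply i).aemeasurable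
        (measurable_pi_apply j).aemeasurable).mp hindep,
      (measurePreserving_eval μ i).map_eq, (measurePreserving_eval μ j).map_eq]
  rw [← hmap, integral_map (by fun_prop) hf.aestronglyMeasurable]

variable {D : Type*} [MeasurableSpace D] {k : D → D → ℝ}

theorem integral_pi_sum_sum (hb : BoundedKernel k) (hm : Measurable k.uncurry)
    (μ : Measure D) [IsProbabilityMeasure μ] (n : ℕ) :
    ∫ x, ∑ i : Fin n, ∑ j : Fin n, k (x i) (x j) ∂Measure.pi (fun _ => μ) =
      n * (∫ x, k x x ∂μ + (n - 1) * ∫ x, ∫ y, k x y ∂μ ∂μ) := by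
  have hint (i j : Fin n) :
      Integrable (fun x : Fin n → D => k (x i) (x j)) (Measure.pi fun _ => μ) :=
    hb.integrable_comp hm _ (measurable_pi_apply i) (measurable_pi_apply j)
  have hdiag (i : Fin n) :
      ∫ x : Fin n → D, k (x i) (x i) ∂Measure.pi (fun _ => μ) = ∫ x, k x x ∂μ :=
    integral_comp_eval (μ := fun _ : Fin n => μ) (f := fun x => k x x)
      (hm.comp (measurable_id.prodMk measurable_id)).aestronglyMeasurable
  have hoff {i j : Fin n} (hij : j ≠ i) :
      ∫ x : Fin n → D, k (x i) (x j) ∂Measure.pi (fun _ => μ) = ∫ x, ∫ y, k x y ∂μ ∂μ :=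
    (integral_pi_eval_eval (fun _ => μ) hij.symm hm).trans
      (integral_prod _ (hb.integrable_comp hm _ measurable_fst measurable_snd))
  have hrow (i : Fin n) :
      ∑ j, ∫ x : Fin n → D, k (x i) (x j) ∂Measure.pi (fun _ => μ) =
        ∫ x, k x x ∂μ + (n - 1) * ∫ x, ∫ y, k x y ∂μ ∂μ := by
    rw [← Finset.add_sum_erase _ _ (Finset.mem_univ i), hdiag,
      Finset.sum_congr rfl fun j hj => hoff (Finset.ne_of_mem_erase hj), Finset.sum_const,
      Finset.card_erase_of_mem (Finset.mem_univ i), Finset.card_fin, nsmul_eq_mul,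
      Nat.cast_pred i.pos]
  rw [integral_finsetSum _ fun i _ => integrable_finsetSum _ fun j _ => hint i j]
  simp only [integral_finsetSum _ fun j _ => hint _ j, hrow, Finset.sum_const, Finset.card_univ,
    Fintype.card_fin, nsmul_eq_mul]

theorem PosDefKernel.integral_integral_nonneg (hk : PosDefKernel k) (hb : BoundedKernel k)
    (hm : Measurable k.uncurry) (μ : Measure D) [IsProbabilityMeasure μ] :
    0 ≤ ∫ x, ∫ y, k x y ∂μ ∂μ := by
  set diag := ∫ x, k x x ∂μ
  set energy := ∫ x, ∫ y, k x y ∂μ ∂μ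
  have hsample (n : ℕ) : 0 ≤ diag + n * energy := by
    have h : 0 ≤ ((n + 1 : ℕ) : ℝ) * (diag + ((n + 1 : ℕ) - 1) * energy) := by
      rw [← integral_pi_sum_sum hb hm μ (n + 1)]
      exact integral_nonneg fun x => by simpa using hk.sum_nonneg x 1
    simpa using nonneg_of_mul_nonneg_right h (by positivity)
  by_contra! hneg
  obtain ⟨n, hn⟩ := exists_nat_gt (diag / -energy)
  rw [div_lt_iff₀ (neg_pos.mpr hneg)] at hn
  linarith [hsample n]

theorem PosDefKernel.sum_integral_integral_nonneg (hk : PosDefKernel k) (hb : BoundedKernel k)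
    (hm : Measurable k.uncurry) {ι : Type*} [Fintype ι] (μ : ι → Measure D)
    [∀ i, IsProbabilityMeasure (μ i)] (c : ι → ℝ) :
    0 ≤ ∑ i, ∑ j, c i * c j * ∫ x, ∫ y, k x y ∂μ j ∂μ i := by
  have hnonneg := (hk.sum_sum_comp c).integral_integral_nonneg (hb.sum_sum_comp c)
    (measurable_uncurry_sum_sum_comp hm c) (Measure.pi μ)
  have hinner (x : ι → D) :
      ∫ y, ∑ i, ∑ j, c i * c j * k (x i) (y j) ∂Measure.pi μ =
        ∑ i, ∑ j, c i * c j * ∫ y, k (x i) y ∂μ j := by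
    have hint (i j : ι) : Integrable (fun y : ι → D => c i * c j * k (x i) (y j)) (Measure.pi μ) :=
      (hb.integrable_comp hm _ measurable_const (measurable_pi_apply j)).const_mul _
    rw [integral_finsetSum _ fun i _ => integrable_finsetSum _ fun j _ => hint i j]
    simp only [integral_finsetSum _ fun j _ => hint _ j, integral_const_mul,
      integral_comp_eval (μ := μ) hm.of_uncurry_left.aestronglyMeasurable]
  have hint (i j : ι) :
      Integrable (fun x : ι → D => c i * c j * ∫ y, k (x i) y ∂μ j) (Measure.pi μ) :=
    ((measurePreserving_eval μ i).integrable_comp_of_integrable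
      (hb.integrable_integral hm (μ i) (μ j))).const_mul _
  simp only [hinner] at hnonneg
  rw [integral_finsetSum _ fun i _ => integrable_finsetSum _ fun j _ => hint i j] at hnonneg
  simpa only [integral_finsetSum _ fun j _ => hint _ j, integral_const_mul,
    integral_comp_eval (μ := μ) (hb.integrable_integral hm (μ _) (μ _)).aestronglyMeasurable]
    using hnonneg

end Energy

section Flip

variable {D : Type*} [MeasurableSpace D] {k : D → D → ℝ}

theorem PosDefKernel.meanEmbed_eq_of_meanEmbed_flip_eq (hk : PosDefKernel k)
    (hb : BoundedKernel k) (hm : Measurable k.uncurry) {P Q : Measure D}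
    [IsProbabilityMeasure P] [IsProbabilityMeasure Q]
    (h : ∀ t, meanEmbed (flip k) P t = meanEmbed (flip k) Q t) (t : D) :
    meanEmbed k P t = meanEmbed k Q t := by
  have hPQ (s : D) : ∫ y, k s y ∂P = ∫ y, k s y ∂Q := h s
  have hdirac_right (s : D) : ∫ y, k s y ∂(Measure.dirac t) = k s t :=
    integral_dirac' _ _ hm.of_uncurry_left.stronglyMeasurable
  have hdirac_left : ∫ x, k x t ∂(Measure.dirac t) = k t t :=
    integral_dirac' _ _ hm.of_uncurry_right.stronglyMeasurable
  have hquad (ε : ℝ) :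
      0 ≤ k t t * (ε * ε) + (meanEmbed k P t - meanEmbed k Q t) * ε + 0 := by
    have (i : Fin 3) : IsProbabilityMeasure (![P, Q, Measure.dirac t] i) := by
      fin_cases i
      exacts [‹IsProbabilityMeasure P›, ‹IsProbabilityMeasure Q›,
        Measure.dirac.isProbabilityMeasure]
    have henergy :=
      hk.sum_integral_integral_nonneg hb hm ![P, Q, Measure.dirac t] ![1, -1, ε]
    simp only [Fin.sum_univ_three, Matrix.cons_val, hPQ, hdirac_right, hdirac_left] at henergy
    simp only [meanEmbed]
    linarith
  have hdiscrim := discrim_le_zero hquad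
  rw [discrim, mul_zero, sub_zero] at hdiscrim
  exact sub_eq_zero.mp (pow_eq_zero_iff two_ne_zero |>.mp (hdiscrim.antisymm (sq_nonneg _)))

theorem Characteristic.flip (hch : Characteristic k) (hk : PosDefKernel k)
    (hb : BoundedKernel k) (hm : Measurable k.uncurry) : Characteristic (flip k) :=
  fun P Q hP hQ h => hch P Q hP hQ (hk.meanEmbed_eq_of_meanEmbed_flip_eq hb hm h)

end Flip

section SetIntegral

variable {α β E : Type*} [MeasurableSpace α] [MeasurableSpace β] [MeasurableSpace E]
  {μ : Measure α} {ν : Measure β} {S : α → E} {T : β → E} {u : α → ℝ} {v : β → ℝ}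

theorem integral_indicator_const_comp_mul (hS : Measurable S) {A : Set E} (hA : MeasurableSet A)
    (c : ℝ) : ∫ a, A.indicator (fun _ => c) (S a) * u a ∂μ = c * ∫ a in S ⁻¹' A, u a ∂μ := by
  rw [← integral_indicator (hS hA), ← integral_const_mul]
  congr with a
  by_cases ha : S a ∈ A <;> simp [ha]

theorem integrable_simpleFunc_comp_mul (hS : Measurable S) (hu : Integrable u μ)
    (f : SimpleFunc E ℝ) : Integrable (fun a => f (S a) * u a) μ := by
  obtain ⟨C, hC⟩ := f.exists_forall_norm_le
  exact hu.bdd_mul (f.measurable.comp hS).aestronglyMeasurable (.of_forall fun a => hC (S a))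

theorem integral_simpleFunc_comp_mul_eq_of_setIntegral_eq (hS : Measurable S) (hT : Measurable T)
    (hu : Integrable u μ) (hv : Integrable v ν)
    (h : ∀ A, MeasurableSet A → ∫ a in S ⁻¹' A, u a ∂μ = ∫ b in T ⁻¹' A, v b ∂ν)
    (f : SimpleFunc E ℝ) : ∫ a, f (S a) * u a ∂μ = ∫ b, f (T b) * v b ∂ν := by
  induction f using SimpleFunc.induction with
  | @const c A hA =>
    have hindicator :
        ⇑(SimpleFunc.piecewise A hA (SimpleFunc.const E c) (SimpleFunc.const E 0)) =
          A.indicator fun _ => c := by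
      ext x
      by_cases hx : x ∈ A <;> simp [hx]
    rw [hindicator, integral_indicator_const_comp_mul hS hA,
      integral_indicator_const_comp_mul hT hA, h A hA]
  | @add f g _ ihf ihg =>
    simp only [SimpleFunc.coe_add, Pi.add_apply, add_mul]
    rw [integral_add (integrable_simpleFunc_comp_mul hS hu f)
        (integrable_simpleFunc_comp_mul hS hu g),
      integral_add (integrable_simpleFunc_comp_mul hT hv f)
        (integrable_simpleFunc_comp_mul hT hv g), ihf, ihg]

theorem tendsto_integral_approxBounded_comp_mul (hS : Measurable S) (hu : Integrable u μ)
    {f : E → ℝ} (hf : Measurable f) {C : ℝ} (hC : ∀ x, |f x| ≤ C) :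
    Tendsto (fun n => ∫ a, hf.stronglyMeasurable.approxBounded C n (S a) * u a ∂μ) atTop
      (𝓝 (∫ a, f (S a) * u a ∂μ)) := by
  refine tendsto_integral_of_dominated_convergence (fun a => C * ‖u a‖)
    (fun n => ((SimpleFunc.measurable _).comp hS).aestronglyMeasurable.mul hu.1)
    (hu.norm.const_mul C) (fun n => .of_forall fun a => ?_) (.of_forall fun a => ?_)
  · rw [norm_mul]
    gcongr
    exact hf.stronglyMeasurable.norm_approxBounded_le ((abs_nonneg _).trans (hC (S a))) n (S a)
  · exact (hf.stronglyMeasurable.tendsto_approxBounded_of_norm_le (hC (S a))).mul_const (u a)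

theorem integral_comp_mul_eq_of_setIntegral_eq (hS : Measurable S) (hT : Measurable T)
    (hu : Integrable u μ) (hv : Integrable v ν)
    (h : ∀ A, MeasurableSet A → ∫ a in S ⁻¹' A, u a ∂μ = ∫ b in T ⁻¹' A, v b ∂ν)
    {f : E → ℝ} (hf : Measurable f) {C : ℝ} (hC : ∀ x, |f x| ≤ C) :
    ∫ a, f (S a) * u a ∂μ = ∫ b, f (T b) * v b ∂ν := by
  have hlim := tendsto_integral_approxBounded_comp_mul hS hu hf hC
  simp only [integral_simpleFunc_comp_mul_eq_of_setIntegral_eq hS hT hu hv h] at hlim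
  exact tendsto_nhds_unique hlim (tendsto_integral_approxBounded_comp_mul hT hv hf hC)

end SetIntegral

section CondExp

variable {Ω : Type*} {m mΩ : MeasurableSpace Ω} {μ : Measure Ω} [IsFiniteMeasure μ]

theorem integral_condExp_mul_condExp_right (hm : m ≤ mΩ) {f g : Ω → ℝ} (hf : MemLp f 2 μ)
    (hg : MemLp g 2 μ) :
    ∫ ω, (μ[f | m]) ω * (μ[g | m]) ω ∂μ = ∫ ω, f ω * (μ[g | m]) ω ∂μ := by
  have hpull : μ[f * μ[g | m] | m] =ᵐ[μ] μ[f | m] * μ[g | m] :=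
    condExp_mul_of_stronglyMeasurable_right stronglyMeasurable_condExp
      (hf.integrable_mul (hg.condExp one_le_two)) (hf.integrable one_le_two)
  exact (integral_congr_ae hpull).symm.trans (integral_condExp hm)

theorem integral_condExp_mul_condExp_left (hm : m ≤ mΩ) {f g : Ω → ℝ} (hf : MemLp f 2 μ)
    (hg : MemLp g 2 μ) :
    ∫ ω, (μ[f | m]) ω * (μ[g | m]) ω ∂μ = ∫ ω, (μ[f | m]) ω * g ω ∂μ := by
  simpa only [mul_comm] using integral_condExp_mul_condExp_right hm hg hf

theorem integral_sub_condExp_mul_sub_condExp (hm : m ≤ mΩ) {f g : Ω → ℝ} (hf : MemLp f 2 μ)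
    (hg : MemLp g 2 μ) :
    ∫ ω, (f ω - (μ[f | m]) ω) * (g ω - (μ[g | m]) ω) ∂μ =
      ∫ ω, f ω * g ω ∂μ - ∫ ω, (μ[f | m]) ω * (μ[g | m]) ω ∂μ := by
  have hf' : MemLp (μ[f | m]) 2 μ := hf.condExp one_le_two
  have hg' : MemLp (μ[g | m]) 2 μ := hg.condExp one_le_two
  have hfg : Integrable (fun ω => f ω * g ω) μ := hf.integrable_mul hg
  have hfg' : Integrable (fun ω => f ω * (μ[g | m]) ω) μ := hf.integrable_mul hg'
  have hf'g : Integrable (fun ω => (μ[f | m]) ω * g ω) μ := hf'.integrable_mul hg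
  have hf'g' : Integrable (fun ω => (μ[f | m]) ω * (μ[g | m]) ω) μ := hf'.integrable_mul hg'
  calc
    _ = ∫ ω, (f ω * g ω - (μ[f | m]) ω * g ω) -
          (f ω * (μ[g | m]) ω - (μ[f | m]) ω * (μ[g | m]) ω) ∂μ := by
      simp only [mul_sub, sub_mul]
    _ = (∫ ω, f ω * g ω ∂μ - ∫ ω, (μ[f | m]) ω * g ω ∂μ) -
          (∫ ω, f ω * (μ[g | m]) ω ∂μ - ∫ ω, (μ[f | m]) ω * (μ[g | m]) ω ∂μ) := by
      rw [integral_sub, integral_sub hfg hf'g, integral_sub hfg' hf'g']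
      exacts [hfg.sub hf'g, hfg'.sub hf'g']
    _ = _ := by
      rw [← integral_condExp_mul_condExp_right hm hf hg,
        ← integral_condExp_mul_condExp_left hm hf hg, sub_self, sub_zero]

end CondExp

section CondProd

/-- `P` agrees on measurable rectangles with the law that `(U, V)` would have if `U` and `V` were
conditionally independent given `m`. `IsCondProdMeasure` is the case `U = (X, Z)`, `m = σ(Z)`. -/
def IsCondProdLaw {Ω E F : Type*} [MeasurableSpace Ω] [MeasurableSpace E] [MeasurableSpace F]
    (μ : Measure Ω) (m : MeasurableSpace Ω) (U : Ω → E) (V : Ω → F) (P : Measure (E × F)) : Prop :=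
  ∀ (A : Set E) (B : Set F), MeasurableSet A → MeasurableSet B →
    P.real (A ×ˢ B) = ∫ ω, (μ[fun ω => A.indicator (fun _ => (1 : ℝ)) (U ω) | m]) ω *
      (μ[fun ω => B.indicator (fun _ => (1 : ℝ)) (V ω) | m]) ω ∂μ

variable {Ω E F : Type*} {m mΩ : MeasurableSpace Ω} [MeasurableSpace E] [MeasurableSpace F]
  {μ : Measure Ω} [IsFiniteMeasure μ] {U : Ω → E} {V : Ω → F} {P : Measure (E × F)}

theorem memLp_comp_of_bound (hU : Measurable U) {f : E → ℝ} (hf : Measurable f) {C : ℝ}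
    (hC : ∀ x, |f x| ≤ C) : MemLp (fun ω => f (U ω)) 2 μ :=
  .of_bound (hf.comp hU).aestronglyMeasurable C (.of_forall fun ω => hC (U ω))

theorem memLp_indicator_one_comp (hU : Measurable U) {A : Set E} (hA : MeasurableSet A) :
    MemLp (fun ω => A.indicator (fun _ => (1 : ℝ)) (U ω)) 2 μ :=
  (memLp_const 1).indicator (hU hA)

theorem IsCondProdLaw.setIntegral_fst_preimage (hP : IsCondProdLaw μ m U V P) (hm : m ≤ mΩ)
    (hU : Measurable U) (hV : Measurable V) {A : Set E} {B : Set F} (hA : MeasurableSet A)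
    (hB : MeasurableSet B) :
    ∫ p in Prod.fst ⁻¹' A, B.indicator (fun _ => (1 : ℝ)) p.2 ∂P =
      ∫ ω in U ⁻¹' A, (μ[fun ω => B.indicator (fun _ => (1 : ℝ)) (V ω) | m]) ω ∂μ := by
  calc
    _ = P.real (A ×ˢ B) := by
      change ∫ p in Prod.fst ⁻¹' A, (Prod.snd ⁻¹' B).indicator (fun _ => (1 : ℝ)) p ∂P = _
      rw [setIntegral_indicator (measurable_snd hB), setIntegral_const, smul_eq_mul, mul_one,
        Set.prod_eq]
    _ = ∫ ω, A.indicator (fun _ => 1) (U ω) *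
          (μ[fun ω => B.indicator (fun _ => (1 : ℝ)) (V ω) | m]) ω ∂μ := by
      rw [hP A B hA hB, integral_condExp_mul_condExp_right hm (memLp_indicator_one_comp hU hA)
        (memLp_indicator_one_comp hV hB)]
    _ = _ := by rw [integral_indicator_const_comp_mul hU hA, one_mul]

variable [IsFiniteMeasure P]

theorem IsCondProdLaw.setIntegral_snd_preimage (hP : IsCondProdLaw μ m U V P) (hm : m ≤ mΩ)
    (hU : Measurable U) (hV : Measurable V) {f : E → ℝ} (hf : Measurable f) {C : ℝ}
    (hC : ∀ x, |f x| ≤ C) {B : Set F} (hB : MeasurableSet B) :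
    ∫ p in Prod.snd ⁻¹' B, f p.1 ∂P = ∫ ω in V ⁻¹' B, (μ[fun ω => f (U ω) | m]) ω ∂μ := by
  have hfU : MemLp (fun ω => f (U ω)) 2 μ := memLp_comp_of_bound hU hf hC
  have hBV : MemLp (fun ω => B.indicator (fun _ => (1 : ℝ)) (V ω)) 2 μ :=
    memLp_indicator_one_comp hV hB
  calc
    _ = ∫ p, B.indicator (fun _ => 1) p.2 * f p.1 ∂P := by
      rw [integral_indicator_const_comp_mul measurable_snd hB, one_mul]
    _ = ∫ p, f p.1 * B.indicator (fun _ => 1) p.2 ∂P := by simp only [mul_comm]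
    _ = ∫ ω, f (U ω) * (μ[fun ω => B.indicator (fun _ => (1 : ℝ)) (V ω) | m]) ω ∂μ :=
      integral_comp_mul_eq_of_setIntegral_eq measurable_fst hU
        ((memLp_indicator_one_comp measurable_snd hB).integrable one_le_two) integrable_condExp
        (fun _ hA => hP.setIntegral_fst_preimage hm hU hV hA hB) hf hC
    _ = ∫ ω, B.indicator (fun _ => 1) (V ω) * (μ[fun ω => f (U ω) | m]) ω ∂μ := by
      rw [← integral_condExp_mul_condExp_right hm hfU hBV,
        integral_condExp_mul_condExp_left hm hfU hBV]
      simp only [mul_comm]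
    _ = _ := by rw [integral_indicator_const_comp_mul hV hB, one_mul]

theorem IsCondProdLaw.integral_mul (hP : IsCondProdLaw μ m U V P) (hm : m ≤ mΩ)
    (hU : Measurable U) (hV : Measurable V) {f : E → ℝ} (hf : Measurable f) {C : ℝ}
    (hC : ∀ x, |f x| ≤ C) {g : F → ℝ} (hg : Measurable g) {C' : ℝ} (hC' : ∀ y, |g y| ≤ C') :
    ∫ p, f p.1 * g p.2 ∂P =
      ∫ ω, (μ[fun ω => f (U ω) | m]) ω * (μ[fun ω => g (V ω) | m]) ω ∂μ := by
  have hfP : Integrable (fun p : E × F => f p.1) P :=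
    (memLp_comp_of_bound measurable_fst hf hC).integrable one_le_two
  calc
    _ = ∫ p, g p.2 * f p.1 ∂P := by simp only [mul_comm]
    _ = ∫ ω, g (V ω) * (μ[fun ω => f (U ω) | m]) ω ∂μ :=
      integral_comp_mul_eq_of_setIntegral_eq measurable_snd hV hfP integrable_condExp
        (fun _ hB => hP.setIntegral_snd_preimage hm hU hV hf hC hB) hg hC'
    _ = _ := by
      rw [integral_condExp_mul_condExp_left hm (memLp_comp_of_bound hU hf hC)
        (memLp_comp_of_bound hV hg hC')]
      simp only [mul_comm]

theorem IsCondProdLaw.integral_sub_condExp_mul_sub_condExp (hP : IsCondProdLaw μ m U V P)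
    (hm : m ≤ mΩ) (hU : Measurable U) (hV : Measurable V) {f : E → ℝ} (hf : Measurable f) {C : ℝ}
    (hC : ∀ x, |f x| ≤ C) {g : F → ℝ} (hg : Measurable g) {C' : ℝ} (hC' : ∀ y, |g y| ≤ C') :
    ∫ ω, (f (U ω) - (μ[fun ω => f (U ω) | m]) ω) * (g (V ω) - (μ[fun ω => g (V ω) | m]) ω) ∂μ =
      ∫ p, f p.1 * g p.2 ∂μ.map (fun ω => (U ω, V ω)) - ∫ p, f p.1 * g p.2 ∂P := by
  have hfg : Measurable fun p : E × F => f p.1 * g p.2 := by fun_prop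
  rw [CIPaper.integral_sub_condExp_mul_sub_condExp hm (memLp_comp_of_bound hU hf hC)
    (memLp_comp_of_bound hV hg hC'), hP.integral_mul hm hU hV hf hC hg hC',
    integral_map (hU.prodMk hV).aemeasurable hfg.aestronglyMeasurable]

end CondProd

section Factors

theorem measurable_and_bounded_left_of_mul {E F : Type*} [MeasurableSpace E] [MeasurableSpace F]
    {f : E → ℝ} {g : F → ℝ} (hg : g ≠ 0) (hm : Measurable fun p : E × F => f p.1 * g p.2)
    (hb : ∃ C, ∀ p : E × F, |f p.1 * g p.2| ≤ C) : Measurable f ∧ ∃ C, ∀ x, |f x| ≤ C := by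
  obtain ⟨y, hy⟩ : ∃ y, g y ≠ 0 := Function.ne_iff.mp hg
  obtain ⟨C, hC⟩ := hb
  constructor
  · have hfy : Measurable fun x => f x * g y := hm.comp measurable_prodMk_right
    simpa [hy] using hfy.mul_const (g y)⁻¹
  · refine ⟨C / |g y|, fun x => ?_⟩
    rw [le_div_iff₀ (abs_pos.mpr hy), ← abs_mul]
    exact hC (x, y)

theorem measurable_and_bounded_right_of_mul {E F : Type*} [MeasurableSpace E] [MeasurableSpace F]
    {f : E → ℝ} {g : F → ℝ} (hf : f ≠ 0) (hm : Measurable fun p : E × F => f p.1 * g p.2)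
    (hb : ∃ C, ∀ p : E × F, |f p.1 * g p.2| ≤ C) : Measurable g ∧ ∃ C, ∀ y, |g y| ≤ C := by
  refine measurable_and_bounded_left_of_mul hf (F := E) ?_ (hb.imp fun C hC p => ?_)
  · simpa only [Function.comp_def, Prod.swap, mul_comm] using hm.comp measurable_swap
  · simpa only [Prod.fst_swap, Prod.snd_swap, mul_comm] using hC p.swap

end Factors

section Witness

/-- The tensor product of two kernels, the kernel to which `Assumption1` refers. -/
def tensorKernel {E F : Type*} (kE : E → E → ℝ) (kF : F → F → ℝ) (p q : E × F) : ℝ :=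
  kE p.1 q.1 * kF p.2 q.2

variable {Ω DX DZ DY : Type*} [MeasurableSpace Ω] [MeasurableSpace DX] [MeasurableSpace DZ]
  [MeasurableSpace DY] {μ : Measure Ω} {X : Ω → DX} {Z : Ω → DZ}
  {Y : Ω → DY} {P : Measure ((DX × DZ) × DY)} {kX : DX × DZ → DX × DZ → ℝ} {kY : DY → DY → ℝ}

theorem IsCondProdMeasure.isCondProdLaw (hP : IsCondProdMeasure μ X Z Y P) :
    IsCondProdLaw μ (MeasurableSpace.comap Z inferInstance) (fun ω => (X ω, Z ω)) Y P :=
  hP.2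

theorem IsCondProdMeasure.witness_eq_meanEmbed_sub [IsFiniteMeasure μ]
    (hP : IsCondProdMeasure μ X Z Y P)
    (hX : Measurable X) (hZ : Measurable Z) (hY : Measurable Y)
    (hb : BoundedKernel (tensorKernel kX kY)) (hm : Measurable (tensorKernel kX kY).uncurry)
    (t : (DX × DZ) × DY) :
    witness μ kX kY X Z Y t.1 t.2 =
      meanEmbed (flip (tensorKernel kX kY)) (μ.map fun ω => ((X ω, Z ω), Y ω)) t -
        meanEmbed (flip (tensorKernel kX kY)) P t := by
  simp only [witness, meanEmbed, flip, tensorKernel]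
  rcases eq_or_ne (kX t.1) 0 with hkX | hkX
  · simp [hkX]
  rcases eq_or_ne (kY t.2) 0 with hkY | hkY
  · simp [hkY]
  have hm' : Measurable fun p : (DX × DZ) × DY => kX t.1 p.1 * kY t.2 p.2 := hm.of_uncurry_left
  have hb' : ∃ C, ∀ p : (DX × DZ) × DY, |kX t.1 p.1 * kY t.2 p.2| ≤ C :=
    hb.imp fun C hC => hC t
  obtain ⟨hmX, CX, hCX⟩ := measurable_and_bounded_left_of_mul hkY hm' hb'
  obtain ⟨hmY, CY, hCY⟩ := measurable_and_bounded_right_of_mul hkX hm' hb'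
  have : IsProbabilityMeasure P := hP.1
  exact hP.isCondProdLaw.integral_sub_condExp_mul_sub_condExp hZ.comap_le (hX.prodMk hZ) hY
    hmX hCX hmY hCY

end Witness

end CIPaper

theorem statement_19_general {Ω DX DZ DY : Type*} [MeasurableSpace Ω] [MeasurableSpace DX]
    [MeasurableSpace DZ] [MeasurableSpace DY] {μ : Measure Ω} [IsProbabilityMeasure μ]
    {X : Ω → DX} {Z : Ω → DZ} {Y : Ω → DY} (hX : Measurable X) (hZ : Measurable Z)
    (hY : Measurable Y) {kX : DX × DZ → DX × DZ → ℝ} {kY : DY → DY → ℝ}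
    (hpd : PosDefKernel (tensorKernel kX kY)) (hch : Characteristic (tensorKernel kX kY))
    (hb : BoundedKernel (tensorKernel kX kY)) (hm : Measurable (tensorKernel kX kY).uncurry)
    {P2 : Measure ((DX × DZ) × DY)} (hP2 : IsCondProdMeasure μ X Z Y P2) :
    (μ.map fun ω => ((X ω, Z ω), Y ω)) = P2 ↔ ∀ t1 t2, witness μ kX kY X Z Y t1 t2 = 0 := by
  have hwitness := hP2.witness_eq_meanEmbed_sub hX hZ hY hb hm
  constructor
  · intro heq t1 t2
    rw [hwitness (t1, t2), heq, sub_self]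
  · intro hzero
    refine hch.flip hpd hb hm _ _
      (Measure.isProbabilityMeasure_map ((hX.prodMk hZ).prodMk hY).aemeasurable) hP2.1 fun t => ?_
    rw [← sub_eq_zero, ← hwitness, hzero]

/-- `P_{XZY} = P_{Ẍ⊗Y|Z}` iff the witness function vanishes identically;
in particular if the two measures differ then `Δ` is not identically zero. -/
theorem statement_19
    (dx dy dz : ℕ) (hdx : 1 ≤ dx) (hdy : 1 ≤ dy) (hdz : 1 ≤ dz)
    {Ω : Type} [MeasurableSpace Ω] [StandardBorelSpace Ω] [Nonempty Ω]
    (μ : Measure Ω) [IsProbabilityMeasure μ]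
    (X : Ω → Fin dx → ℝ) (Z : Ω → Fin dz → ℝ) (Y : Ω → Fin dy → ℝ)
    (hX : Measurable X) (hZ : Measurable Z) (hY : Measurable Y)
    (kX : ((Fin dx → ℝ) × (Fin dz → ℝ)) → ((Fin dx → ℝ) × (Fin dz → ℝ)) → ℝ) (kY : (Fin dy → ℝ) → (Fin dy → ℝ) → ℝ)
    (hk : Assumption1 kX kY)
    (P2 : Measure (((Fin dx → ℝ) × (Fin dz → ℝ)) × (Fin dy → ℝ))) (hP2 : IsCondProdMeasure μ X Z Y P2) :
    ((μ.map fun ω => ((X ω, Z ω), Y ω)) = P2 ↔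
      ∀ (t1 : ((Fin dx → ℝ) × (Fin dz → ℝ))) (t2 : Fin dy → ℝ), witness μ kX kY X Z Y t1 t2 = 0) ∧
    ((μ.map fun ω => ((X ω, Z ω), Y ω)) ≠ P2 →
      ¬ ∀ (t1 : ((Fin dx → ℝ) × (Fin dz → ℝ))) (t2 : Fin dy → ℝ), witness μ kX kY X Z Y t1 t2 = 0) := by
  have main := statement_19_general hX hZ hY hk.posdef hk.charac hk.bounded
    hk.continuous.measurable hP2
  exact ⟨main, mt main.mpr⟩
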